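/- Let a, b, t be natural numbers with gcd(a,b) = gcd(b,t) = 1 and t dividing a²+1, and set c = b·(a²+1)/t. Let t* be an integer with t·t* ≡ 1 (mod b). Then S(a, c) = (b² − 1)·a/(t·b) − S(a·b, t) + S(a·t*, b). -/

import Mathlib

/-- The sawtooth function `((x))`: `x - ⌊x⌋ - 1/2` if `x ∉ ℤ`, and `0` if `x ∈ ℤ`. -/
noncomputable def saw (x : ℝ) : ℝ := if Int.fract x = 0 then 0 else x - ⌊x⌋ - 1/2

/-- The classical Dedekind sum `s(a,b) = ∑_{k=1}^b ((k/b)) ((a k / b))`. -/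
noncomputable def dedekindSum (a : ℤ) (b : ℕ) : ℝ :=
  ∑ k ∈ Finset.Icc 1 b, saw ((k : ℝ) / b) * saw ((a : ℝ) * k / b)

/-- The normalized Dedekind sum `S(a,b) = 12 s(a,b)`. -/
noncomputable def S (a : ℤ) (b : ℕ) : ℝ := 12 * dedekindSum a b

/-- integer version of the sawtooth: `w n j = ((j/n))`. -/
noncomputable def ww (n : ℕ) (j : ℤ) : ℝ :=
  if (n : ℤ) ∣ j then 0 else ((j % (n : ℤ) : ℤ) : ℝ) / n - 1 / 2

/-- indicator of divisibility -/
noncomputable def dl (n : ℕ) (j : ℤ) : ℝ := if (n : ℤ) ∣ j then 1 else 0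

/-- value on the interval right of `j` -/
noncomputable def ff (n : ℕ) (j : ℤ) : ℝ := ((j % (n : ℤ) : ℤ) : ℝ) / n - 1 / 2 + 1 / (2 * n)

/-- homogeneous Dedekind sums -/
noncomputable def DD (b c : ℤ) (a : ℕ) : ℝ :=
  ∑ k ∈ Finset.range a, ww a (b * k) * ww a (c * k)

lemma saw_eq (n : ℕ) (hn : 0 < n) (j : ℤ) (x : ℝ) (hx : x = (j : ℝ) / n) : saw x = ww n j := by
  subst hx
  have hn' : (n : ℝ) ≠ 0 := by positivity
  have hfl : ⌊(j : ℝ) / n⌋ = j / (n : ℤ) := by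
    have := Int.floor_div_natCast (j : ℝ) n
    simpa using this
  have hd : (j : ℝ) = n * ((j / (n : ℤ) : ℤ) : ℝ) + ((j % (n : ℤ) : ℤ) : ℝ) := by
    exact_mod_cast (Int.mul_ediv_add_emod j n).symm
  have hfr : (j : ℝ) / n - ⌊(j : ℝ) / n⌋ = ((j % (n : ℤ) : ℤ) : ℝ) / n := by
    rw [hfl]
    field_simp
    linarith
  unfold saw ww
  have h0 : Int.fract ((j : ℝ) / n) = ((j % (n : ℤ) : ℤ) : ℝ) / n := by
    rw [← hfr]; rfl
  have hiff : Int.fract ((j : ℝ) / n) = 0 ↔ (n : ℤ) ∣ j := by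
    rw [h0, div_eq_zero_iff, Int.dvd_iff_emod_eq_zero]
    constructor
    · rintro (h | h)
      · exact_mod_cast h
      · exact absurd h hn'
    · intro h; left; exact_mod_cast h
  rw [hfr]
  by_cases h : (n : ℤ) ∣ j
  · rw [if_pos h, if_pos (hiff.2 h)]
  · rw [if_neg h, if_neg (fun h' => h (hiff.1 h'))]

lemma ww_congr (n : ℕ) {i j : ℤ} (h : i ≡ j [ZMOD n]) : ww n i = ww n j := by
  unfold ww
  have h1 : (n : ℤ) ∣ i ↔ (n : ℤ) ∣ j := h.dvd_iff
  have h2 : i % (n : ℤ) = j % n := h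
  simp only [h1, h2]

lemma ww_neg (n : ℕ) (hn : 0 < n) (j : ℤ) : ww n (-j) = - ww n j := by
  unfold ww
  by_cases h : (n : ℤ) ∣ j
  · simp [h]
  · have hn' : (n : ℝ) ≠ 0 := by positivity
    have h3 : (-j) % (n : ℤ) = n - j % n := by
      have := Int.neg_emod (a := j) (b := (n : ℤ))
      rw [this, if_neg h]
      simp
    rw [if_neg h, if_neg (by simpa using h), h3]
    push_cast
    field_simp
    ring

/-- periodic functions on ZMod -/
lemma sum_zmod (n : ℕ) [NeZero n] (F : ℤ → ℝ) :
    ∑ k ∈ Finset.range n, F k = ∑ x : ZMod n, F (x.val : ℤ) := by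
  symm
  apply Finset.sum_bij' (fun (x : ZMod n) _ => x.val) (fun k _ => (k : ZMod n))
  · intro x _; simpa using ZMod.val_lt x
  · intro k _; simp
  · intro x _; simp
  · intro k hk; exact ZMod.val_cast_of_lt (by simpa using hk)
  · intro x _; rfl

lemma periodic_sum_affine (n : ℕ) (hn : 0 < n) (F : ℤ → ℝ)
    (hF : ∀ i j : ℤ, i ≡ j [ZMOD n] → F i = F j) (u v m : ℤ) (huv : u * v ≡ 1 [ZMOD n]) :
    ∑ k ∈ Finset.range n, F (u * k + m) = ∑ k ∈ Finset.range n, F k := by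
  have : NeZero n := ⟨hn.ne'⟩
  rw [sum_zmod n (fun k => F (u * k + m)), sum_zmod n F]
  have huv' : (u : ZMod n) * (v : ZMod n) = 1 := by
    have := (ZMod.intCast_eq_intCast_iff _ _ n).2 huv
    simpa using this
  apply Finset.sum_bij' (fun (x : ZMod n) _ => (u : ZMod n) * x + (m : ZMod n))
    (fun (x : ZMod n) _ => (v : ZMod n) * (x - m))
  · intro x _; simp
  · intro x _; simp
  · intro x _; linear_combination x * huv'
  · intro x _; linear_combination (x - m) * huv'
  · intro x _
    apply hF
    rw [← ZMod.intCast_eq_intCast_iff]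
    simp

lemma S_eq (a : ℤ) (b : ℕ) (hb : 0 < b) : S a b = 12 * DD a 1 b := by
  unfold S dedekindSum DD
  congr 1
  have h1 : ∀ k ∈ Finset.Icc 1 b, saw ((k : ℝ) / b) * saw ((a : ℝ) * k / b)
      = ww b (a * (k : ℤ)) * ww b (1 * (k : ℤ)) := by
    intro k _
    rw [saw_eq b hb (1 * (k : ℤ)) _ (by simp), saw_eq b hb (a * (k : ℤ)) _ (by simp), mul_comm]
  rw [Finset.sum_congr rfl h1]
  have h2 := periodic_sum_affine b hb (fun k => ww b (a * k) * ww b (1 * k))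
    (by intro i j hij
        beta_reduce
        rw [ww_congr b (hij.mul_left a), ww_congr b (hij.mul_left 1)]) 1 1 1 (by rfl)
  rw [← h2]
  have h3 := Finset.sum_Ico_add' (fun k : ℕ => ww b (a * (k : ℤ)) * ww b (1 * (k : ℤ))) 0 b 1
  have h4 : Finset.Icc 1 b = Finset.Ico (0 + 1) (b + 1) := by
    ext k; simp
  rw [h4, ← h3, Finset.range_eq_Ico]
  apply Finset.sum_congr rfl
  intro k _
  push_cast
  simp

lemma DD_mul (b c : ℤ) (a : ℕ) (ha : 0 < a) (u v : ℤ) (huv : u * v ≡ 1 [ZMOD a]) :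
    DD b c a = DD (b * u) (c * u) a := by
  unfold DD
  have h2 := periodic_sum_affine a ha (fun k => ww a (b * k) * ww a (c * k))
    (by intro i j hij
        beta_reduce
        rw [ww_congr a (hij.mul_left b), ww_congr a (hij.mul_left c)]) u v 0 huv
  rw [← h2]
  apply Finset.sum_congr rfl
  intro k _
  simp only [add_zero, mul_assoc]

lemma DD_congr {b c b' c' : ℤ} (a : ℕ) (h : b ≡ b' [ZMOD a]) (h' : c ≡ c' [ZMOD a]) :
    DD b c a = DD b' c' a := by
  unfold DD
  apply Finset.sum_congr rfl
  intro k _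
  rw [ww_congr a (h.mul_right _), ww_congr a (h'.mul_right _)]

lemma DD_comm (b c : ℤ) (a : ℕ) : DD b c a = DD c b a := by
  unfold DD
  apply Finset.sum_congr rfl
  intro k _
  ring

lemma sum_blocks (m n : ℕ) (F : ℤ → ℝ) :
    ∑ j ∈ Finset.range (m * n), F j
      = ∑ i ∈ Finset.range m, ∑ l ∈ Finset.range n, F (i + m * l) := by
  induction n with
  | zero => simp
  | succ n ih =>
    rw [Nat.mul_succ, Finset.sum_range_add, ih]
    simp only [Finset.sum_range_succ, Finset.sum_add_distrib]
    congr 1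
    apply Finset.sum_congr rfl
    intro i _
    congr 1
    push_cast
    ring

lemma sum_dl (m n : ℕ) (hn : 0 < n) (F : ℤ → ℝ) :
    ∑ j ∈ Finset.range (n * m), dl n j * F j = ∑ k ∈ Finset.range m, F (n * k) := by
  rw [sum_blocks n m (fun j => dl n j * F j), Finset.sum_eq_single 0]
  · apply Finset.sum_congr rfl
    intro k _
    simp [dl]
  · intro i hi h0
    apply Finset.sum_eq_zero
    intro l _
    have : ¬ ((n : ℤ) ∣ (i : ℤ) + n * l) := by
      rw [Int.dvd_add_left (Dvd.intro _ rfl)]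
      intro h
      have := Nat.le_of_dvd (Nat.pos_of_ne_zero h0) (Int.natCast_dvd_natCast.1 h)
      simp at hi
      omega
    simp [dl, this]
  · intro h; simp at h; omega

lemma sum_id (n : ℕ) : ∑ l ∈ Finset.range n, (l : ℝ) = n * (n - 1) / 2 := by
  induction n with
  | zero => simp
  | succ n ih => rw [Finset.sum_range_succ, ih]; push_cast; ring

lemma sum_sq (n : ℕ) : ∑ l ∈ Finset.range n, (l : ℝ) ^ 2 = n * (n - 1) * (2 * n - 1) / 6 := by
  induction n with
  | zero => simp
  | succ n ih => rw [Finset.sum_range_succ, ih]; push_cast; ring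

lemma ww_small (n : ℕ) (i : ℕ) (h0 : 0 < i) (h : i < n) : ww n i = (i : ℝ) / n - 1 / 2 := by
  unfold ww
  have h1 : ¬ ((n : ℤ) ∣ (i : ℤ)) := by
    intro h'
    have := Nat.le_of_dvd h0 (Int.natCast_dvd_natCast.1 h')
    omega
  rw [if_neg h1, Int.emod_eq_of_lt (by omega) (by omega)]
  simp

lemma ww_zero (n : ℕ) : ww n 0 = 0 := by simp [ww]

lemma dist_small (m c : ℕ) (hc : 0 < c) (i : ℕ) (hi : i < m) :
    ∑ l ∈ Finset.range c, ww (m * c) (i + m * l) = ww m i := by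
  have hm' : (m : ℝ) ≠ 0 := by have : 0 < m := by omega
                               positivity
  have hc' : (c : ℝ) ≠ 0 := by positivity
  have key : ∀ l ∈ Finset.range c, 0 < i + m * l →
      ww (m * c) (i + m * l) = (i : ℝ) / (m * c) + (l : ℝ) / c - 1 / 2 := by
    intro l hl h0
    have hlt : i + m * l < m * c := by
      have : l + 1 ≤ c := by simpa using hl
      nlinarith
    have := ww_small (m * c) (i + m * l) h0 hlt
    push_cast at this
    rw [this]
    field_simp
  rcases Nat.eq_zero_or_pos i with h0 | h0
  · subst h0
    have hz : ww m ((0 : ℕ) : ℤ) = 0 := by simpa using ww_zero m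
    rw [hz]
    have h2 : ∑ l ∈ Finset.range c, ww (m * c) (((0 : ℕ) : ℤ) + m * l)
        = ∑ l ∈ Finset.range c, (((l : ℝ) / c - 1 / 2) + if l = 0 then 1 / 2 else 0) := by
      apply Finset.sum_congr rfl
      intro l hl
      rcases Nat.eq_zero_or_pos l with h | h
      · subst h; simp [ww_zero]
      · rw [key l hl (by have : 0 < m := hi
                         positivity)]
        simp [h.ne']
    rw [h2, Finset.sum_add_distrib, Finset.sum_sub_distrib, ← Finset.sum_div, sum_id]
    simp [hc]
    field_simp
    ring
  · rw [Finset.sum_congr rfl (fun l hl => key l hl (by positivity)), ww_small m i h0 hi]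
    rw [Finset.sum_sub_distrib, Finset.sum_add_distrib, ← Finset.sum_div _ _ (c : ℝ), sum_id]
    simp
    field_simp
    ring

lemma dist_mul (m c : ℕ) (hc : 0 < c) (u v : ℤ) (huv : u * v ≡ 1 [ZMOD c]) (j : ℕ) (hm : 0 < m) :
    ∑ l ∈ Finset.range c, ww (m * c) (j + m * (u * l)) = ww m j := by
  have h1 := periodic_sum_affine c hc (fun l => ww (m * c) (((j % m : ℕ) : ℤ) + m * l))
    (by intro x y hxy
        beta_reduce
        apply ww_congr
        apply Int.ModEq.add_left
        push_cast
        exact hxy.mul_left') u v ((j / m : ℕ) : ℤ) huv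
  beta_reduce at h1
  rw [dist_small m c hc (j % m) (Nat.mod_lt _ hm)] at h1
  have hj : (j : ℤ) = ((j % m : ℕ) : ℤ) + m * ((j / m : ℕ) : ℤ) := by
    exact_mod_cast (Nat.mod_add_div j m).symm
  have h3 : ww m j = ww m ((j % m : ℕ) : ℤ) := by
    apply ww_congr
    conv_lhs => rw [hj]
    exact (Int.modEq_iff_dvd.2 ⟨-((j / m : ℕ) : ℤ), by ring⟩)
  rw [h3, ← h1]
  apply Finset.sum_congr rfl
  intro l _
  congr 1
  conv_lhs => rw [hj]
  ring

lemma sum_ww_sq (a : ℕ) (ha : 0 < a) :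
    ∑ k ∈ Finset.range a, ww a k * ww a k = ((a : ℝ) - 1) * (a - 2) / (12 * a) := by
  have ha' : (a : ℝ) ≠ 0 := by positivity
  have h2 : ∑ l ∈ Finset.range a, ww a l * ww a l
      = ∑ l ∈ Finset.range a, (((l : ℝ) ^ 2 / a ^ 2 - l / a + 1 / 4) - if l = 0 then 1 / 4 else 0) := by
    apply Finset.sum_congr rfl
    intro l hl
    rcases Nat.eq_zero_or_pos l with h | h
    · subst h; simp [ww_zero]
    · rw [ww_small a l h (by simpa using hl), if_neg h.ne']
      ring
  rw [h2, Finset.sum_sub_distrib, Finset.sum_add_distrib, Finset.sum_sub_distrib, ← Finset.sum_div,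
    ← Finset.sum_div, sum_id, sum_sq]
  simp [ha]
  field_simp
  ring

lemma exists_inv (b c : ℕ) (h : Nat.Coprime b c) : ∃ v : ℤ, (b : ℤ) * v ≡ 1 [ZMOD c] := by
  refine ⟨Nat.gcdA b c, ?_⟩
  have := Nat.gcd_eq_gcd_ab b c
  rw [h] at this
  exact Int.modEq_iff_dvd.2 ⟨Nat.gcdB b c, by push_cast at this; linarith⟩

lemma sum_cross (a b c : ℕ) (ha : 0 < a) (hb : 0 < b) (hc : 0 < c) (hbc : Nat.Coprime b c) :
    ∑ j ∈ Finset.range (a * b * c), ww (a * c) j * ww (a * b) j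
      = ((a : ℝ) - 1) * (a - 2) / (12 * a) := by
  obtain ⟨v, hv⟩ := exists_inv b c hbc
  rw [sum_blocks (a * b) c (fun j => ww (a * c) j * ww (a * b) j)]
  have h1 : ∀ i ∈ Finset.range (a * b), ∑ l ∈ Finset.range c,
      ww (a * c) (i + (a * b : ℕ) * l) * ww (a * b) (i + (a * b : ℕ) * l)
      = ww a i * ww (a * b) i := by
    intro i _
    rw [← dist_mul a c hc b v hv i ha, Finset.sum_mul]
    apply Finset.sum_congr rfl
    intro l _
    congr 1
    · congr 1; push_cast; ring
    · apply ww_congr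
      exact (Int.modEq_iff_dvd.2 ⟨-(l : ℤ), by ring⟩)
  rw [Finset.sum_congr rfl h1, sum_blocks a b (fun i => ww a i * ww (a * b) i), ← sum_ww_sq a ha]
  apply Finset.sum_congr rfl
  intro i _
  have h2 := dist_mul a b hb 1 1 (by rfl) i ha
  nth_rewrite 2 [← h2]
  rw [Finset.mul_sum]
  apply Finset.sum_congr rfl
  intro l _
  congr 1
  · apply ww_congr
    exact (Int.modEq_iff_dvd.2 ⟨-(l : ℤ), by ring⟩)
  · rw [one_mul]

lemma sum_T (a b c N p q r : ℕ) (ha : 0 < a) (hb : 0 < b) (hc : 0 < c) (hbc : Nat.Coprime b c)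
    (hN : N = a * b * c) (hp : p = b * c) (hq : q = a * c) (hr : r = a * b) :
    ∑ j ∈ Finset.range N, (1 / (p : ℝ) - dl p j) * (ww q j * ww r j)
      = ((a : ℝ) - 1) * (a - 2) / (12 * a) / (b * c) - DD b c a := by
  have hp0 : 0 < p := by subst hp; positivity
  simp only [sub_mul]
  rw [Finset.sum_sub_distrib, ← Finset.mul_sum]
  have h1 := sum_cross a b c ha hb hc hbc
  rw [← hN, ← hq, ← hr] at h1
  have h2 := sum_dl a p hp0 (fun j => ww q j * ww r j)
  have hN' : p * a = N := by subst hN hp; ring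
  rw [hN'] at h2
  rw [h1, h2]
  have key : ∀ (x y : ℕ) (k : ℤ), 0 < y → ww (x * y) (y * k) = ww x k := by
    intro x y k hy
    have hy' : (y : ℝ) ≠ 0 := by positivity
    unfold ww
    have e1 : ((x * y : ℕ) : ℤ) ∣ (y : ℤ) * k ↔ (x : ℤ) ∣ k := by
      push_cast
      rw [mul_comm (x : ℤ), Int.mul_dvd_mul_iff_left (by omega)]
    have e2 : ((y : ℤ) * k) % ((x * y : ℕ) : ℤ) = y * (k % x) := by
      push_cast
      rw [mul_comm (x : ℤ), Int.mul_emod_mul_of_pos _ _ (by omega)]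
    simp only [e1, e2]
    push_cast
    rw [mul_comm (x : ℝ), mul_div_mul_left _ _ hy']
  congr 1
  · subst hp; push_cast; ring
  · unfold DD
    apply Finset.sum_congr rfl
    intro k _
    have e1 : ww q ((p : ℤ) * k) = ww a (b * k) := by
      rw [hq, hp, ← key a c _ hc]; congr 1; push_cast; ring
    have e2 : ww r ((p : ℤ) * k) = ww a (c * k) := by
      rw [hr, hp, ← key a b _ hb]; congr 1; push_cast; ring
    simp only [e1, e2]

lemma ff_eq (n : ℕ) (j : ℤ) : ff n j = ww n j + (1 / n - dl n j) / 2 := by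
  unfold ff ww dl
  by_cases h : (n : ℤ) ∣ j
  · rw [if_pos h, if_pos h, Int.emod_eq_zero_of_dvd h]
    simp
    ring
  · rw [if_neg h, if_neg h]
    ring

lemma ff_pred (n : ℕ) (hn : 0 < n) (j : ℤ) :
    ff n (j - 1) = ww n j - (1 / n - dl n j) / 2 := by
  have hn' : (n : ℝ) ≠ 0 := by positivity
  unfold ff ww dl
  have hd := Int.mul_ediv_add_emod j n
  have hl := Int.emod_lt_of_pos j (b := (n : ℤ)) (by omega)
  have hg := Int.emod_nonneg j (b := (n : ℤ)) (by omega)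
  by_cases h : (n : ℤ) ∣ j
  · have : (j - 1) % (n : ℤ) = n - 1 := by
      obtain ⟨k, rfl⟩ := h
      have : (n : ℤ) * k - 1 = (n - 1) + n * (k - 1) := by ring
      rw [this, Int.add_mul_emod_self_left, Int.emod_eq_of_lt (by omega) (by omega)]
    rw [if_pos h, if_pos h, this]
    push_cast
    field_simp
    ring
  · have h0 : j % (n : ℤ) ≠ 0 := fun h' => h (Int.dvd_of_emod_eq_zero h')
    have : (j - 1) % (n : ℤ) = j % n - 1 := by
      have e : j - 1 = (j % n - 1) + n * (j / n) := by linarith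
      conv_lhs => rw [e]
      rw [Int.add_mul_emod_self_left, Int.emod_eq_of_lt (by omega) (by omega)]
    rw [if_neg h, if_neg h, this]
    push_cast
    field_simp
    ring

lemma ff_period (n : ℕ) (i j : ℤ) (h : i ≡ j [ZMOD n]) : ff n i = ff n j := by
  unfold ff
  rw [h]

lemma dl_mul (p q N : ℕ) (h : ∀ j : ℤ, (p : ℤ) ∣ j → (q : ℤ) ∣ j → (N : ℤ) ∣ j)
    (hp : p ∣ N) (hq : q ∣ N) (j : ℤ) : dl p j * dl q j = dl N j := by
  unfold dl
  have hp' : (p : ℤ) ∣ N := by exact_mod_cast hp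
  have hq' : (q : ℤ) ∣ N := by exact_mod_cast hq
  by_cases h1 : (p : ℤ) ∣ j
  · by_cases h2 : (q : ℤ) ∣ j
    · simp [h1, h2, h j h1 h2]
    · have : ¬ (N : ℤ) ∣ j := fun h3 => h2 (hq'.trans h3)
      simp [h2, this]
  · have : ¬ (N : ℤ) ∣ j := fun h3 => h1 (hp'.trans h3)
    simp [h1, this]

lemma dl_cop (x y z : ℕ) (h : Nat.Coprime x y) (j : ℤ) :
    dl (x * z) j * dl (y * z) j = dl (x * y * z) j := by
  apply dl_mul
  · intro j h1 h2
    rcases Nat.eq_zero_or_pos z with hz | hz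
    · subst hz; simpa using h1
    · have hz' : (z : ℤ) ≠ 0 := by omega
      obtain ⟨k, rfl⟩ : (z : ℤ) ∣ j := (Dvd.intro_left (x : ℤ) (by push_cast; rfl)).trans h1
      push_cast at *
      rw [mul_comm _ (z : ℤ), Int.mul_dvd_mul_iff_left hz'] at *
      exact IsCoprime.mul_dvd (Nat.isCoprime_iff_coprime.2 h) h1 h2
  · exact ⟨y, by ring⟩
  · exact ⟨x, by ring⟩

theorem three_term (a b c : ℕ) (ha : 0 < a) (hb : 0 < b) (hc : 0 < c)
    (hab : Nat.Coprime a b) (hbc : Nat.Coprime b c) (hac : Nat.Coprime a c) :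
    DD b c a + DD a c b + DD a b c
      = -1 / 4 + ((a : ℝ) / (b * c) + (b : ℝ) / (a * c) + (c : ℝ) / (a * b)) / 12 := by
  obtain ⟨p, hp⟩ : ∃ p, p = b * c := ⟨_, rfl⟩
  obtain ⟨q, hq⟩ : ∃ p, p = a * c := ⟨_, rfl⟩
  obtain ⟨r, hr⟩ : ∃ p, p = a * b := ⟨_, rfl⟩
  obtain ⟨N, hN⟩ : ∃ p, p = a * b * c := ⟨_, rfl⟩
  have hp0 : 0 < p := by subst hp; positivity
  have hq0 : 0 < q := by subst hq; positivity
  have hr0 : 0 < r := by subst hr; positivity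
  have hN0 : 0 < N := by subst hN; positivity
  have T1 := sum_T a b c N p q r ha hb hc hbc hN hp hq hr
  have T2 := sum_T b a c N q p r hb ha hc hac (by rw [hN]; ring) hq hp (by rw [hr]; ring)
  have T3 := sum_T c a b N r p q hc ha hb hab (by rw [hN]; ring) hr (by rw [hp]; ring)
    (by rw [hq]; ring)
  have tel : ∑ j ∈ Finset.range N, (ff p (j : ℤ) * ff q j * ff r j
      - ff p ((j : ℤ) - 1) * ff q ((j : ℤ) - 1) * ff r ((j : ℤ) - 1)) = 0 := by
    have := Finset.sum_range_sub
      (fun j : ℕ => ff p ((j : ℤ) - 1) * ff q ((j : ℤ) - 1) * ff r ((j : ℤ) - 1)) N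
    push_cast at this
    simp only [add_sub_cancel_right] at this
    rw [this]
    have e : ∀ x y : ℕ, N = x * y → ff x ((N : ℤ) - 1) = ff x (0 - 1) := by
      intro x y h
      apply ff_period
      exact Int.modEq_iff_dvd.2 ⟨-y, by rw [h]; push_cast; ring⟩
    rw [e p a (by subst hp hN; ring), e q b (by subst hq hN; ring), e r c (by subst hr hN; ring)]
    simp
  have e1 : ∀ j : ℤ, dl p j * dl q j = dl N j := by
    intro j
    have := dl_cop b a c hab.symm j
    rw [hp, hq, this, hN]; congr 1; ring
  have e2 : ∀ j : ℤ, dl p j * dl r j = dl N j := by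
    intro j
    have := dl_cop c a b hac.symm j
    rw [hp, hr, mul_comm b c, this, hN]; congr 1; ring
  have e3 : ∀ j : ℤ, dl q j * dl r j = dl N j := by
    intro j
    have := dl_cop c b a hbc.symm j
    rw [hq, hr, mul_comm a c, mul_comm a b, this, hN]; congr 1; ring
  have e4 : ∀ j : ℤ, dl N j * dl r j = dl N j := by
    intro j
    have : dl r j * dl r j = dl r j := by unfold dl; split_ifs <;> simp
    rw [← e2, mul_assoc, this]
  have s1 : ∀ x y : ℕ, 0 < x → N = x * y → ∑ j ∈ Finset.range N, dl x (j : ℤ) = y := by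
    intro x y hx h
    have := sum_dl y x hx (fun _ => 1)
    rw [← h] at this
    simpa using this
  have sp := s1 p a hp0 (by subst hp hN; ring)
  have sq := s1 q b hq0 (by subst hq hN; ring)
  have sr := s1 r c hr0 (by subst hr hN; ring)
  have sN := s1 N 1 hN0 (by ring)
  have key : ∀ j ∈ Finset.range N, (ff p (j : ℤ) * ff q j * ff r j
      - ff p ((j : ℤ) - 1) * ff q ((j : ℤ) - 1) * ff r ((j : ℤ) - 1))
      = (1 / (p : ℝ) - dl p j) * (ww q j * ww r j) + (1 / (q : ℝ) - dl q j) * (ww p j * ww r j)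
        + (1 / (r : ℝ) - dl r j) * (ww p j * ww q j)
        + (1 / 4) * (1 / (p * q * r : ℝ) - 1 / (q * r : ℝ) * dl p j - 1 / (p * r : ℝ) * dl q j
          - 1 / (p * q : ℝ) * dl r j + (1 / (p : ℝ) + 1 / (q : ℝ) + 1 / (r : ℝ) - 1) * dl N j) := by
    intro j _
    rw [ff_eq, ff_eq, ff_eq, ff_pred p hp0, ff_pred q hq0, ff_pred r hr0]
    have h1 := e1 j
    have h2 := e2 j
    have h3 := e3 j
    have h4 := e4 j
    simp only [one_div, mul_inv]
    linear_combination (1 / 4) * ((r : ℝ)⁻¹ * h1 + (q : ℝ)⁻¹ * h2 + (p : ℝ)⁻¹ * h3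
      - dl r j * h1 - h4)
  rw [Finset.sum_congr rfl key] at tel
  simp only [Finset.sum_add_distrib, Finset.sum_sub_distrib, ← Finset.mul_sum, T1, T2, T3, sp, sq,
    sr, sN, Finset.sum_const, Finset.card_range, nsmul_eq_mul] at tel
  have ha' : (a : ℝ) ≠ 0 := by positivity
  have hb' : (b : ℝ) ≠ 0 := by positivity
  have hc' : (c : ℝ) ≠ 0 := by positivity
  subst hp hq hr hN
  push_cast at tel
  rw [← sub_eq_zero, ← neg_eq_zero, ← tel]
  field_simp
  ring

theorem stmt_7 (a b t : ℕ) (ha : 0 < a) (hb : 0 < b) (ht : 0 < t)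
    (hab : Nat.Coprime a b) (hbt : Nat.Coprime b t) (htdvd : t ∣ a ^ 2 + 1)
    (c : ℕ) (hc : c = b * ((a ^ 2 + 1) / t))
    (tstar : ℤ) (htstar : (t : ℤ) * tstar ≡ 1 [ZMOD (b : ℤ)]) :
    S (a : ℤ) c =
      ((b : ℝ) ^ 2 - 1) * (a : ℝ) / ((t : ℝ) * b) - S ((a : ℤ) * b) t
        + S ((a : ℤ) * tstar) b := by
  obtain ⟨q, hq⟩ := htdvd
  have hq' : (a ^ 2 + 1) / t = q := by rw [hq]; exact Nat.mul_div_cancel_left q ht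
  rw [hq'] at hc
  have hq0 : 0 < q := by
    rcases Nat.eq_zero_or_pos q with h | h
    · subst h; simp at hq
    · exact h
  have hc0 : 0 < c := by subst hc; positivity
  have hqz : (a : ℤ) ^ 2 + 1 = t * q := by exact_mod_cast hq
  have hqr : (a : ℝ) ^ 2 + 1 = t * q := by exact_mod_cast hq
  have hat : Nat.Coprime a t := by
    rw [← Nat.isCoprime_iff_coprime]
    exact ⟨-a, q, by linear_combination -hqz⟩
  have haq : Nat.Coprime a q := by
    rw [← Nat.isCoprime_iff_coprime]
    exact ⟨-a, t, by linear_combination -hqz⟩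
  have hac : Nat.Coprime a c := by rw [hc]; exact hab.mul_right haq
  have R1 := three_term a b t ha hb ht hab hbt hat
  have R2 := three_term a c 1 ha hc0 one_pos hac (Nat.coprime_one_right c) (Nat.coprime_one_right a)
  have z : DD a c 1 = 0 := by simp [DD, ww]
  rw [S_eq _ _ hc0, S_eq _ _ ht, S_eq _ _ hb]
  have tq1 : (t : ℤ) * q ≡ 1 [ZMOD a] := Int.modEq_iff_dvd.2 ⟨-a, by linear_combination hqz⟩
  have d1 : DD b t a = DD c 1 a := by
    rw [DD_mul b t a ha q t (by rw [mul_comm]; exact tq1)]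
    apply DD_congr
    · rw [hc]; push_cast; rfl
    · exact tq1
  have d2 : DD a t b = DD (a * tstar) 1 b := by
    rw [DD_mul a t b hb tstar t (by rw [mul_comm]; exact htstar)]
    exact DD_congr _ rfl htstar
  have d3 : DD a b t = - DD (a * b) 1 t := by
    have e : (a : ℤ) * a ≡ -1 [ZMOD t] := Int.modEq_iff_dvd.2 ⟨-q, by linear_combination -hqz⟩
    rw [DD_mul a b t ht a (-a) (by simpa using e.neg), DD_congr t e (b' := -1) (c' := a * b)
      (by rw [mul_comm]), DD_comm]
    unfold DD
    rw [← Finset.sum_neg_distrib]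
    apply Finset.sum_congr rfl
    intro k _
    rw [neg_mul, ww_neg t ht]
    ring
  rw [d1, d2, d3] at R1
  rw [z] at R2
  have ha' : (a : ℝ) ≠ 0 := by positivity
  have hb' : (b : ℝ) ≠ 0 := by positivity
  have ht' : (t : ℝ) ≠ 0 := by positivity
  have hq1 : (q : ℝ) ≠ 0 := by positivity
  have hcr : (c : ℝ) = b * (a ^ 2 + 1) / t := by
    rw [hc, hqr]; push_cast; field_simp
  have hh : (a : ℝ) ^ 2 + 1 ≠ 0 := by positivity
  simp only [Nat.cast_one] at R1 R2
  have main : (12 : ℝ) * DD a 1 c = 12 * DD (a * tstar) 1 b - 12 * DD (a * b) 1 t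
      + ((a : ℝ) / (c * 1) + (c : ℝ) / (a * 1) + (1 : ℝ) / (a * c))
      - ((a : ℝ) / (b * t) + (b : ℝ) / (a * t) + (t : ℝ) / (a * b)) := by
    linear_combination 12 * R2 - 12 * R1
  rw [main, hcr]
  field_simp
  ring
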